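/- Let W:[0,1]²→[0,1] be a graphon whose normalized degree function g is strictly increasing and satisfies L₁|x−y| ≤ |g(x)−g(y)| for all x,y∈[0,1] and some L₁>0. Let the number of graphs M be fixed, and suppose n^{(m)} → ∞ for every m∈⟦M⟧. Then max_{m∈⟦M⟧} max_{i∈⟦n^{(m)}⟧} |Û^{JGS}_{i,(m)} − U_{i,(m)}| converges to 0 in probability. -/

import Mathlib

open MeasureTheory Set Finset
open scoped Classical

noncomputable section

/-- The uniform distribution on `[0,1]`. -/
def unif : Measure ℝ := volume.restrict (Set.Icc (0:ℝ) 1)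

instance : IsProbabilityMeasure unif := by
  constructor
  simp [unif, Real.volume_Icc]

/-- Index of a node: a graph index `m` together with a node index in graph `m`. -/
abbrev NodeIdx (M : ℕ) (n : Fin M → ℕ) := Σ m : Fin M, Fin (n m)

/-- Index of a (ordered) dyad within one graph of the collection. -/
abbrev DyadIdx (M : ℕ) (n : Fin M → ℕ) := Σ m : Fin M, Fin (n m) × Fin (n m)

/-- Sample space: latent positions for every node, and auxiliary uniform noise
for every dyad (used to generate the Bernoulli edges). -/
abbrev Sample (M : ℕ) (n : Fin M → ℕ) := (NodeIdx M n → ℝ) × (DyadIdx M n → ℝ)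

/-- The law of the collection: latent positions are i.i.d. uniform on `[0,1]`,
independent of the i.i.d. uniform dyad noises. -/
def Pmodel (M : ℕ) (n : Fin M → ℕ) : Measure (Sample M n) :=
  (Measure.pi fun _ => unif).prod (Measure.pi fun _ => unif)

variable {M : ℕ} {n : Fin M → ℕ}

/-- Latent position `U_{i,(m)}` of node `i` of graph `m`. -/
def Upos (m : Fin M) (i : Fin (n m)) (ω : Sample M n) : ℝ := ω.1 ⟨m, i⟩

/-- Adjacency variable `A^{(m)}_{i,j}`: given the latent positions, edges are
independent Bernoulli variables with success probability `W(U_i,U_j)`,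
realized by thresholding the uniform dyad noise; `A_{ii} = 0` and `A` symmetric. -/
def Aedge (W : ℝ → ℝ → ℝ) (m : Fin M) (i j : Fin (n m)) (ω : Sample M n) : ℝ :=
  if i = j then 0
  else if ω.2 ⟨m, (min i j, max i j)⟩ ≤ W (Upos m i ω) (Upos m j ω) then 1 else 0

/-- Normalized empirical degree `d̂_{i,(m)} = (1/(n^{(m)}-1)) ∑_j A^{(m)}_{i,j}`. -/
def dhat (W : ℝ → ℝ → ℝ) (m : Fin M) (i : Fin (n m)) (ω : Sample M n) : ℝ :=
  (∑ j, Aedge W m i j ω) / ((n m : ℝ) - 1)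

/-- Total number of nodes `N = ∑_m n^{(m)}`. -/
def Ntot (M : ℕ) (n : Fin M → ℕ) : ℕ := ∑ m, n m

/-- Normalized degree function `g(u) = ∫₀¹ W(u,v) dv`. -/
def gdeg (W : ℝ → ℝ → ℝ) (u : ℝ) : ℝ := ∫ v in Set.Icc (0:ℝ) 1, W u v

/-- Empirical rank `r̂_{i,(m)}` of node `(i,m)` among all `N` nodes of the
collection sorted by increasing normalized empirical degree. -/
def rhat (W : ℝ → ℝ → ℝ) (m : Fin M) (i : Fin (n m)) (ω : Sample M n) : ℕ :=
  (Finset.univ.filter fun p : NodeIdx M n => dhat W p.1 p.2 ω ≤ dhat W m i ω).card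

/-- JGS latent position estimator `Û^{JGS}_{i,(m)} = r̂_{i,(m)}/N - 1/(2N)`. -/
def Uhat (W : ℝ → ℝ → ℝ) (m : Fin M) (i : Fin (n m)) (ω : Sample M n) : ℝ :=
  (rhat W m i ω : ℝ) / (Ntot M n : ℝ) - 1 / (2 * (Ntot M n : ℝ))

/-!
Given the position `U_i` of a node, its empirical degree is an average of i.i.d. terms with mean
`g (U_i)`. Hoeffding's inequality and a union bound over the nodes, which costs only the factor
`n^{(m)}`, make all empirical degrees uniformly close to `g (U_i)`. A strictly monotone function
increases by at least some `η > 0` over every interval of length `δ` inside `[0, 1]`, because a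
finite grid of mesh `δ / 2` has a smallest increment; hence nodes whose positions differ by at
least `δ` are eventually ranked in the right order, and the normalized rank of a node lies between
the values at `U_i - δ` and `U_i + δ` of the empirical distribution function of the positions.
That function is uniformly close to the identity: by Hoeffding at the points of a finite grid, and
by monotonicity in between.
-/

open ProbabilityTheory Filter

section Hoeffding

lemma measure_le_abs_le_of_hasSubgaussianMGF {Ω : Type*} [MeasurableSpace Ω] {P : Measure Ω}
    [IsFiniteMeasure P] {Y : Ω → ℝ} {c : NNReal} (hY : HasSubgaussianMGF Y c P) {r : ℝ}
    (hr : 0 ≤ r) :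
    P {ω | r ≤ |Y ω|} ≤ ENNReal.ofReal (2 * Real.exp (-r ^ 2 / (2 * c))) := by
  have hone {Z : Ω → ℝ} (hZ : HasSubgaussianMGF Z c P) :
      P {ω | r ≤ Z ω} ≤ ENNReal.ofReal (Real.exp (-r ^ 2 / (2 * c))) :=
    (ENNReal.le_ofReal_iff_toReal_le (measure_ne_top _ _) (Real.exp_nonneg _)).2
      (hZ.measure_ge_le hr)
  have hunion : {ω | r ≤ |Y ω|} = {ω | r ≤ Y ω} ∪ {ω | r ≤ (-Y) ω} := by
    ext ω
    exact (le_abs : r ≤ |Y ω| ↔ r ≤ Y ω ∨ r ≤ -Y ω)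
  calc P {ω | r ≤ |Y ω|} ≤ P {ω | r ≤ Y ω} + P {ω | r ≤ (-Y) ω} := by
        rw [hunion]
        exact measure_union_le _ _
    _ ≤ _ := add_le_add (hone hY) (hone hY.neg)
    _ = ENNReal.ofReal (2 * Real.exp (-r ^ 2 / (2 * c))) := by
      rw [← ENNReal.ofReal_add (Real.exp_nonneg _) (Real.exp_nonneg _), two_mul (Real.exp _)]

variable {ι : Type*} [Fintype ι] {δ : ℝ}

lemma measure_le_abs_mean_sub_le_of_iIndepFun {Ω : Type*} [MeasurableSpace Ω] {P : Measure Ω}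
    {X : ι → Ω → ℝ} (hindep : iIndepFun X P) (hmeas : ∀ i, AEMeasurable (X i) P)
    (h01 : ∀ i, ∀ᵐ ω ∂P, X i ω ∈ Set.Icc (0 : ℝ) 1) (hδ : 0 ≤ δ) :
    P {ω | δ ≤ |(∑ i, X i ω) / Fintype.card ι - (∑ i, P[X i]) / Fintype.card ι|} ≤
      ENNReal.ofReal (2 * Real.exp (-(2 * δ ^ 2 * Fintype.card ι))) := by
  have := hindep.isProbabilityMeasure
  have hcentered : iIndepFun (fun i ω => X i ω - P[X i]) P :=
    hindep.comp (fun i x => x - ∫ ω, X i ω ∂P) fun i => measurable_id.sub_const _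
  have hsub : HasSubgaussianMGF (fun ω => ∑ i, (X i ω - P[X i]))
      (∑ _i : ι, (‖(1 : ℝ) - 0‖₊ / 2) ^ 2) P :=
    HasSubgaussianMGF.sum_of_iIndepFun hcentered
      fun i _ => hasSubgaussianMGF_of_mem_Icc (hmeas i) (h01 i)
  have hexponent : -(δ * Fintype.card ι) ^ 2 /
      (2 * ((∑ _i : ι, (‖(1 : ℝ) - 0‖₊ / 2) ^ 2 : NNReal) : ℝ)) =
        -(2 * δ ^ 2 * Fintype.card ι) := by
    rcases eq_or_ne (Fintype.card ι : ℝ) 0 with h0 | h0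
    · simp [h0]
    · simp only [sub_zero, nnnorm_one, one_div, inv_pow, Finset.sum_const, Finset.card_univ,
        nsmul_eq_mul, NNReal.coe_mul, NNReal.coe_natCast, NNReal.coe_inv, NNReal.coe_pow,
        NNReal.coe_ofNat]
      field_simp
  rw [← hexponent]
  refine (measure_mono fun ω hω => ?_).trans
    (measure_le_abs_le_of_hasSubgaussianMGF hsub (by positivity))
  rw [Set.mem_ofPred_eq, ← sub_div, ← Finset.sum_sub_distrib, abs_div, Nat.abs_cast] at hω
  exact mul_le_of_le_div₀ (abs_nonneg _) (Nat.cast_nonneg _) hω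

lemma pi_le_abs_mean_sub_integral_le {α : Type*} [MeasurableSpace α] (μ : Measure α)
    [IsProbabilityMeasure μ] {f : α → ℝ} (hf : Measurable f)
    (hf01 : ∀ x, f x ∈ Set.Icc (0 : ℝ) 1) (hδ : 0 ≤ δ) :
    (Measure.pi fun _ : ι => μ) {z | δ ≤ |(∑ j, f (z j)) / Fintype.card ι - ∫ x, f x ∂μ|} ≤
      ENNReal.ofReal (2 * Real.exp (-(2 * δ ^ 2 * Fintype.card ι))) := by
  rcases isEmpty_or_nonempty ι with hι | hι
  · simpa using prob_le_one.trans one_le_two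
  have hmean : ∀ j, ∫ z : ι → α, f (z j) ∂(Measure.pi fun _ => μ) = ∫ x, f x ∂μ := fun j =>
    integral_comp_eval (μ := fun _ : ι => μ) hf.aestronglyMeasurable
  have := measure_le_abs_mean_sub_le_of_iIndepFun (P := Measure.pi fun _ : ι => μ)
    (iIndepFun_pi (X := fun _ => f) fun _ => hf.aemeasurable)
    (fun j => (hf.comp (measurable_pi_apply j)).aemeasurable)
    (fun j => ae_of_all _ fun z => hf01 (z j)) hδ
  simpa [hmean] using this

lemma prod_pi_le_abs_mean_sub_integral_le {α β : Type*} [MeasurableSpace α] [MeasurableSpace β]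
    (μ : Measure α) [IsProbabilityMeasure μ] (ν : Measure β) [IsProbabilityMeasure ν]
    {F : α → β → ℝ} (hF : Measurable (Function.uncurry F))
    (hF01 : ∀ a b, F a b ∈ Set.Icc (0 : ℝ) 1) (hδ : 0 ≤ δ) :
    (μ.prod (Measure.pi fun _ : ι => ν))
        {q | δ ≤ |(∑ j, F q.1 (q.2 j)) / Fintype.card ι - ∫ b, F q.1 b ∂ν|} ≤
      ENNReal.ofReal (2 * Real.exp (-(2 * δ ^ 2 * Fintype.card ι))) := by
  have hsum : Measurable fun q : α × (ι → β) => ∑ j, F q.1 (q.2 j) :=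
    Finset.measurable_sum _ fun j _ =>
      hF.comp (measurable_fst.prodMk ((measurable_pi_apply j).comp measurable_snd))
  have hint : Measurable fun a => ∫ b, F a b ∂ν :=
    hF.stronglyMeasurable.integral_prod_right'.measurable
  have hset : MeasurableSet {q : α × (ι → β) |
      δ ≤ |(∑ j, F q.1 (q.2 j)) / Fintype.card ι - ∫ b, F q.1 b ∂ν|} :=
    measurableSet_le measurable_const ((hsum.div_const _).sub (hint.comp measurable_fst)).abs
  rw [Measure.prod_apply hset]
  calc _ ≤ ∫⁻ _, ENNReal.ofReal (2 * Real.exp (-(2 * δ ^ 2 * Fintype.card ι))) ∂μ :=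
        lintegral_mono fun a => pi_le_abs_mean_sub_integral_le ν hF.of_uncurry_left (hF01 a) hδ
    _ = _ := by simp

-- Conditioning on `z i` leaves an average of i.i.d. terms.
lemma pi_le_abs_mean_erase_sub_integral_le [DecidableEq ι] {β : Type*} [MeasurableSpace β]
    (ν : Measure β) [IsProbabilityMeasure ν] {F : β → β → ℝ} (hF : Measurable (Function.uncurry F))
    (hF01 : ∀ a b, F a b ∈ Set.Icc (0 : ℝ) 1) (i : ι) (hδ : 0 ≤ δ) :
    (Measure.pi fun _ : ι => ν) {z | δ ≤ |(∑ j ∈ Finset.univ.erase i, F (z i) (z j)) /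
        ((Fintype.card ι : ℝ) - 1) - ∫ b, F (z i) b ∂ν|} ≤
      ENNReal.ofReal (2 * Real.exp (-(2 * δ ^ 2 * ((Fintype.card ι : ℝ) - 1)))) := by
  have hsplit := measurePreserving_piEquivPiSubtypeProd (fun _ : ι => ν) (· = i)
  have hcard : (Fintype.card {j // ¬ j = i} : ℝ) = (Fintype.card ι : ℝ) - 1 := by
    rw [Fintype.card_subtype_compl, Fintype.card_subtype_eq,
      Nat.cast_sub (Fintype.card_pos_iff.2 ⟨i⟩), Nat.cast_one]
  have hsum (z : ι → β) : ∑ j ∈ Finset.univ.erase i, F (z i) (z j) =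
      ∑ j : {j // ¬ j = i}, F (z i) (z j) :=
    Finset.sum_subtype _ (by simp) _
  simp only [hsum, ← hcard]
  exact (hsplit.measure_preimage_le _).trans <|
    prod_pi_le_abs_mean_sub_integral_le (F := fun (x : {j // j = i} → β) b => F (x ⟨i, rfl⟩) b)
      _ ν (hF.comp (f := fun q : ({j // j = i} → β) × β => (q.1 ⟨i, rfl⟩, q.2)) (by fun_prop))
      (fun x b => hF01 _ b) hδ

lemma tendsto_ofReal_two_mul_exp_neg {c : ℝ} (hc : 0 < c) :
    Tendsto (fun k : ℕ => ENNReal.ofReal (2 * Real.exp (-(c * k)))) atTop (nhds 0) := by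
  have h := (Real.tendsto_exp_neg_atTop_nhds_zero.comp
    (tendsto_natCast_atTop_atTop.const_mul_atTop hc)).const_mul 2
  rw [mul_zero] at h
  simpa using ENNReal.tendsto_ofReal h

lemma tendsto_natCast_mul_ofReal_two_mul_exp_neg {c : ℝ} (hc : 0 < c) (d : ℝ) :
    Tendsto (fun k : ℕ => (k : ENNReal) * ENNReal.ofReal (2 * Real.exp (-(c * (k - d)))))
      atTop (nhds 0) := by
  have h := ((Real.tendsto_pow_mul_exp_neg_atTop_nhds_zero 1).comp
    (tendsto_natCast_atTop_atTop.const_mul_atTop hc)).const_mul (2 * Real.exp (c * d) / c)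
  rw [mul_zero] at h
  have h' := ENNReal.tendsto_ofReal h
  rw [ENNReal.ofReal_zero] at h'
  refine h'.congr fun k => ?_
  rw [← ENNReal.ofReal_natCast, ← ENNReal.ofReal_mul (Nat.cast_nonneg _)]
  congr 1
  simp only [Function.comp_apply, pow_one]
  rw [mul_sub, neg_sub, sub_eq_add_neg, Real.exp_add]
  field_simp

end Hoeffding

section EmpiricalCDF

variable {ι : Type*} [Fintype ι]

/-- The empirical distribution function `c ↦ #{i | x i ≤ c} / #ι` of the sample `x`, identically
`0` for an empty sample. Evaluated at a sample point `x i`, it is the normalized rank of `i`. -/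
def empCDF (x : ι → ℝ) (c : ℝ) : ℝ := (#{i | x i ≤ c} : ℝ) / Fintype.card ι

lemma empCDF_nonneg (x : ι → ℝ) (c : ℝ) : 0 ≤ empCDF x c := by unfold empCDF; positivity

lemma empCDF_le_one (x : ι → ℝ) (c : ℝ) : empCDF x c ≤ 1 :=
  div_le_one_of_le₀ (Nat.cast_le.2 (Finset.card_le_univ _)) (Nat.cast_nonneg _)

lemma empCDF_le_empCDF_of_imp {x y : ι → ℝ} {c d : ℝ} (h : ∀ i, x i ≤ c → y i ≤ d) :
    empCDF x c ≤ empCDF y d := by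
  refine div_le_div_of_nonneg_right (Nat.cast_le.2 (Finset.card_le_card ?_)) (Nat.cast_nonneg _)
  exact Finset.monotone_filter_right _ fun i _ => h i

lemma monotone_empCDF (x : ι → ℝ) : Monotone (empCDF x) := fun _ _ h =>
  empCDF_le_empCDF_of_imp fun _ hi => hi.trans h

lemma abs_empCDF_self_sub_le {x d : ι → ℝ} {i : ι} {δ δ' : ℝ} (hδ : 0 ≤ δ) (hδ' : 0 ≤ δ')
    (hx : x i ∈ Set.Icc (0 : ℝ) 1) (hsep : ∀ j k, x j + δ ≤ x k → d j < d k)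
    (hcdf : ∀ c ∈ Set.Icc (0 : ℝ) 1, |empCDF x c - c| ≤ δ') :
    |empCDF d (d i) - x i| ≤ δ + δ' := by
  have hupper : empCDF d (d i) ≤ empCDF x (x i + δ) :=
    empCDF_le_empCDF_of_imp fun j hj => le_of_not_ge fun hij => hj.not_gt (hsep i j hij)
  have hlower : empCDF x (x i - δ) ≤ empCDF d (d i) :=
    empCDF_le_empCDF_of_imp fun j hj => (hsep j i (by linarith)).le
  rw [abs_le]
  constructor
  · rcases le_total δ (x i) with h | h
    · linarith [(abs_le.1 (hcdf (x i - δ) ⟨by linarith, by linarith [hx.2]⟩)).1]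
    · linarith [empCDF_nonneg d (d i)]
  · rcases le_total (x i + δ) 1 with h | h
    · linarith [(abs_le.1 (hcdf (x i + δ) ⟨by linarith [hx.1], h⟩)).2]
    · linarith [empCDF_le_one d (d i)]

lemma exists_grid_le_abs_sub_of_monotone {F : ℝ → ℝ} (hF : Monotone F) {K : ℕ} (hK : 0 < K)
    {c : ℝ} (hc : c ∈ Set.Icc (0 : ℝ) 1) {δ : ℝ} (h : δ + 1 / K ≤ |F c - c|) :
    ∃ k ∈ Finset.range (K + 1), δ ≤ |F (k / K) - k / K| := by
  have hK' : (0 : ℝ) < K := Nat.cast_pos.2 hK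
  have hcK : 0 ≤ c * K := mul_nonneg hc.1 hK'.le
  have hceil_le : ⌈c * K⌉₊ ≤ K := Nat.ceil_le.2 (mul_le_of_le_one_left hK'.le hc.2)
  rcases le_abs.1 h with h | h
  · refine ⟨⌈c * K⌉₊, Finset.mem_range_succ_iff.2 hceil_le, le_abs.2 (.inl ?_)⟩
    have hle : c ≤ ⌈c * K⌉₊ / K := (le_div_iff₀ hK').2 (Nat.le_ceil _)
    have hlt : (⌈c * K⌉₊ : ℝ) / K < c + 1 / K := by
      rw [div_lt_iff₀ hK', add_mul, one_div_mul_cancel hK'.ne']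
      exact Nat.ceil_lt_add_one hcK
    linarith [hF hle]
  · refine ⟨⌊c * K⌋₊,
      Finset.mem_range_succ_iff.2 ((Nat.floor_le_ceil _).trans hceil_le), le_abs.2 (.inr ?_)⟩
    have hle : (⌊c * K⌋₊ : ℝ) / K ≤ c := (div_le_iff₀ hK').2 (Nat.floor_le hcK)
    have hlt : c < ⌊c * K⌋₊ / K + 1 / K := by
      rw [← add_div, lt_div_iff₀ hK']
      exact Nat.lt_floor_add_one _
    linarith [hF hle]

lemma pi_le_abs_empCDF_sub_cdf_le (μ : Measure ℝ) [IsProbabilityMeasure μ] (c : ℝ) {δ : ℝ}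
    (hδ : 0 ≤ δ) :
    (Measure.pi fun _ : ι => μ) {x | δ ≤ |empCDF x c - cdf μ c|} ≤
      ENNReal.ofReal (2 * Real.exp (-(2 * δ ^ 2 * Fintype.card ι))) := by
  have hsum (x : ι → ℝ) : ∑ i, (Set.Iic c).indicator 1 (x i) = (#{i | x i ≤ c} : ℝ) := by
    simp [Set.indicator_apply]
  have := pi_le_abs_mean_sub_integral_le (ι := ι) μ (f := (Set.Iic c).indicator 1)
    (measurable_one.indicator measurableSet_Iic)
    (fun x => by by_cases hx : x ≤ c <;> simp [hx]) hδ
  simpa only [empCDF, hsum, integral_indicator_one measurableSet_Iic, ← cdf_eq_real] using this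

lemma cdf_unif {c : ℝ} (hc : c ∈ Set.Icc (0 : ℝ) 1) : cdf unif c = c := by
  have hinter : Set.Iic c ∩ Set.Icc 0 1 = Set.Icc 0 c := by
    rw [← Set.Ici_inter_Iic, Set.inter_left_comm, Set.Iic_inter_Iic, min_eq_left hc.2,
      Set.Ici_inter_Iic]
  rw [cdf_eq_real, unif, measureReal_restrict_apply measurableSet_Iic, hinter,
    Real.volume_real_Icc_of_le hc.1, sub_zero]

lemma pi_unif_exists_le_abs_empCDF_sub_le {K : ℕ} (hK : 0 < K) {δ : ℝ} (hδ : 0 ≤ δ) :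
    (Measure.pi fun _ : ι => unif)
        {x | ∃ c ∈ Set.Icc (0 : ℝ) 1, δ + 1 / K ≤ |empCDF x c - c|} ≤
      (K + 1) * ENNReal.ofReal (2 * Real.exp (-(2 * δ ^ 2 * Fintype.card ι))) := by
  have hgrid {k : ℕ} (hk : k ∈ Finset.range (K + 1)) : (k / K : ℝ) ∈ Set.Icc (0 : ℝ) 1 :=
    ⟨by positivity, div_le_one_of_le₀ (Nat.cast_le.2 (Finset.mem_range_succ_iff.1 hk))
      (Nat.cast_nonneg _)⟩
  calc _ ≤ (Measure.pi fun _ : ι => unif) (⋃ k ∈ Finset.range (K + 1),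
          {x | δ ≤ |empCDF x (k / K) - cdf unif (k / K)|}) := by
        refine measure_mono ?_
        rintro x ⟨c, hc, h⟩
        obtain ⟨k, hk, hle⟩ := exists_grid_le_abs_sub_of_monotone (monotone_empCDF x) hK hc h
        exact Set.mem_iUnion₂.2 ⟨k, hk, by rwa [Set.mem_ofPred_eq, cdf_unif (hgrid hk)]⟩
    _ ≤ ∑ k ∈ Finset.range (K + 1),
          ENNReal.ofReal (2 * Real.exp (-(2 * δ ^ 2 * Fintype.card ι))) :=
        (measure_biUnion_finset_le _ _).trans
          (Finset.sum_le_sum fun k _ => pi_le_abs_empCDF_sub_cdf_le unif _ hδ)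
    _ = _ := by simp

end EmpiricalCDF

lemma exists_pos_forall_add_le_of_strictMonoOn {g : ℝ → ℝ} {a b δ : ℝ}
    (hg : StrictMonoOn g (Set.Icc a b)) (hδ : 0 < δ) :
    ∃ η > 0, ∀ x ∈ Set.Icc a b, ∀ y ∈ Set.Icc a b, x + δ ≤ y → g x + η ≤ g y := by
  set h := δ / 2 with hh
  have hh0 : 0 < h := half_pos hδ
  have hgrid {k : ℕ} (hk : a + k * h ≤ b) : a + k * h ∈ Set.Icc a b :=
    ⟨le_add_of_nonneg_right (by positivity), hk⟩
  obtain ⟨η, hη, hgap⟩ : ∃ η > 0, ∀ k : Fin ⌊(b - a) / h⌋₊,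
      g (a + (k : ℕ) * h) + η < g (a + ((k : ℕ) + 1 : ℕ) * h) := by
    refine Pi.exists_forall_pos_add_lt fun k => ?_
    have hk : a + ((k : ℕ) + 1 : ℕ) * h ≤ b := by
      have := (Nat.le_floor_iff' k.val.succ_ne_zero).1 k.isLt
      rw [le_div_iff₀ hh0] at this
      linarith
    have hlt : a + (k : ℕ) * h < a + ((k : ℕ) + 1 : ℕ) * h := by gcongr; simp
    exact hg (hgrid (hlt.le.trans hk)) (hgrid hk) hlt
  refine ⟨η, hη, fun x hx y hy hxy => ?_⟩
  set k := ⌈(x - a) / h⌉₊ with hk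
  have hxk : x ≤ a + k * h := by
    have := (div_le_iff₀ hh0).1 (Nat.le_ceil ((x - a) / h))
    linarith
  have hky : a + (k + 1 : ℕ) * h ≤ y := by
    have hlt := Nat.ceil_lt_add_one (div_nonneg (sub_nonneg.2 hx.1) hh0.le)
    rw [← hk, ← sub_lt_iff_lt_add, lt_div_iff₀ hh0] at hlt
    push_cast
    linarith
  have hkb : k < ⌊(b - a) / h⌋₊ := by
    refine Nat.le_floor ?_
    rw [le_div_iff₀ hh0]
    linarith [hy.2]
  have hk1 := hgrid (hky.trans hy.2)
  have hk0 : a + k * h ∈ Set.Icc a b := ⟨hx.1.trans hxk, by push_cast at hky; linarith [hy.2]⟩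
  calc g x + η ≤ g (a + k * h) + η := by gcongr; exact hg.monotoneOn hx hk0 hxk
    _ ≤ g (a + (k + 1 : ℕ) * h) := (hgap ⟨k, hkb⟩).le
    _ ≤ g y := hg.monotoneOn hk1 hy hky

section EmpiricalDegree

lemma measurePreserving_pi_comp_of_injective {ι κ α : Type*} [Fintype ι] [Fintype κ]
    [MeasurableSpace α] (μ : Measure α) [IsProbabilityMeasure μ] {e : κ → ι}
    (he : Function.Injective e) :
    MeasurePreserving (fun (z : ι → α) (k : κ) => z (e k)) (Measure.pi fun _ : ι => μ)
      (Measure.pi fun _ : κ => μ) := by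
  refine ⟨by fun_prop, ?_⟩
  have hindep : iIndepFun (fun (k : κ) (z : ι → α) => z (e k)) (Measure.pi fun _ : ι => μ) :=
    (iIndepFun_pi (μ := fun _ : ι => μ) (X := fun _ x => x) fun _ => aemeasurable_id).precomp he
  rw [hindep.map_fun_eq_pi_map fun k => (measurable_pi_apply _).aemeasurable]
  simp only [(measurePreserving_eval (fun _ : ι => μ) _).map_eq]

lemma injective_min_max {α : Type*} [LinearOrder α] (i : α) :
    Function.Injective fun j => (min i j, max i j) := by
  intro j k h
  obtain ⟨hmin, hmax⟩ := Prod.mk.inj h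
  exact eq_of_inf_eq_sup_eq (a := i) (by simpa only [inf_comm] using hmin)
    (by simpa only [sup_comm] using hmax)

lemma measurePreserving_position_noise (m : Fin M) (i : Fin (n m)) :
    MeasurePreserving (fun (ω : Sample M n) (j : Fin (n m)) =>
      (Upos m j ω, ω.2 ⟨m, (min i j, max i j)⟩)) (Pmodel M n)
      (Measure.pi fun _ : Fin (n m) => unif.prod unif) := by
  have hposition := measurePreserving_pi_comp_of_injective unif
    (sigma_mk_injective (β := fun m => Fin (n m)) (i := m))
  have hnoise := measurePreserving_pi_comp_of_injective unif
    ((sigma_mk_injective (β := fun m => Fin (n m) × Fin (n m)) (i := m)).comp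
      (injective_min_max i))
  exact (measurePreserving_arrowProdEquivProdArrow ℝ ℝ (Fin (n m))
    (fun _ => unif) (fun _ => unif)).symm.comp (hposition.prod hnoise)

lemma ae_unif_mem_Icc : ∀ᵐ x ∂unif, x ∈ Set.Icc (0 : ℝ) 1 := ae_restrict_mem measurableSet_Icc

lemma ae_position_mem_Icc : ∀ᵐ ω ∂Pmodel M n, ∀ p, ω.1 p ∈ Set.Icc (0 : ℝ) 1 :=
  ae_all_iff.2 fun p =>
    ((Measure.quasiMeasurePreserving_eval (fun _ : NodeIdx M n => unif) p).comp
      Measure.quasiMeasurePreserving_fst).ae ae_unif_mem_Icc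

lemma integral_threshold_unif {f : ℝ → ℝ} (hf : Measurable f)
    (hf01 : ∀ v ∈ Set.Icc (0 : ℝ) 1, f v ∈ Set.Icc (0 : ℝ) 1) :
    ∫ z, (if z.2 ≤ f z.1 then (1 : ℝ) else 0) ∂(unif.prod unif) =
      ∫ v in Set.Icc (0 : ℝ) 1, f v := by
  have hmeas : Measurable fun z : ℝ × ℝ => (if z.2 ≤ f z.1 then (1 : ℝ) else 0) :=
    .ite (measurableSet_le measurable_snd (hf.comp measurable_fst)) measurable_const
      measurable_const
  have hint : Integrable (fun z : ℝ × ℝ => (if z.2 ≤ f z.1 then (1 : ℝ) else 0))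
      (unif.prod unif) :=
    .of_mem_Icc 0 1 hmeas.aemeasurable (ae_of_all _ fun z => by split_ifs <;> simp)
  have hslice (v : ℝ) : ∫ x, (if x ≤ f v then (1 : ℝ) else 0) ∂unif = unif.real (Set.Iic (f v)) :=
    integral_indicator_one measurableSet_Iic
  rw [integral_prod _ hint]
  refine integral_congr_ae ?_
  filter_upwards [ae_unif_mem_Icc] with v hv
  rw [hslice, ← cdf_eq_real, cdf_unif (hf01 v hv)]

variable {W : ℝ → ℝ → ℝ} {δ : ℝ}

lemma dhat_eq_sum_erase_div (m : Fin M) (i : Fin (n m)) (ω : Sample M n) :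
    dhat W m i ω = (∑ j ∈ Finset.univ.erase i,
      if ω.2 ⟨m, (min i j, max i j)⟩ ≤ W (Upos m i ω) (Upos m j ω) then 1 else 0) /
        ((n m : ℝ) - 1) := by
  rw [dhat, ← Finset.sum_erase _ (a := i) (by simp [Aedge])]
  congr 1
  exact Finset.sum_congr rfl fun j hj => if_neg (Finset.ne_of_mem_erase hj).symm

lemma Pmodel_le_abs_dhat_sub_gdeg_le (hW : Measurable (Function.uncurry W))
    (hW01 : ∀ u ∈ Set.Icc (0 : ℝ) 1, ∀ v ∈ Set.Icc (0 : ℝ) 1, W u v ∈ Set.Icc (0 : ℝ) 1)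
    (hδ : 0 ≤ δ) (m : Fin M) (i : Fin (n m)) :
    Pmodel M n {ω | δ ≤ |dhat W m i ω - gdeg W (Upos m i ω)|} ≤
      ENNReal.ofReal (2 * Real.exp (-(2 * δ ^ 2 * ((n m : ℝ) - 1)))) := by
  set edge : ℝ × ℝ → ℝ × ℝ → ℝ := fun a b => if b.2 ≤ W a.1 b.1 then 1 else 0 with hedge
  have hmeas : Measurable (Function.uncurry edge) :=
    .ite (measurableSet_le (by fun_prop)
      (hW.comp (f := fun q : (ℝ × ℝ) × (ℝ × ℝ) => (q.1.1, q.2.1)) (by fun_prop)))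
      measurable_const measurable_const
  have hmem (a b : ℝ × ℝ) : edge a b ∈ Set.Icc (0 : ℝ) 1 := by
    simp only [hedge]; split_ifs <;> simp
  have hbound := pi_le_abs_mean_erase_sub_integral_le (unif.prod unif) hmeas hmem i hδ
  rw [Fintype.card_fin] at hbound
  refine (measure_mono_ae ?_).trans
    (((measurePreserving_position_noise m i).measure_preimage_le _).trans hbound)
  filter_upwards [ae_position_mem_Icc] with ω hω hdev
  have hmean : ∫ b, edge (Upos m i ω, ω.2 ⟨m, (min i i, max i i)⟩) b ∂(unif.prod unif) =
      gdeg W (Upos m i ω) :=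
    integral_threshold_unif hW.of_uncurry_left (hW01 _ (hω ⟨m, i⟩))
  replace hdev : δ ≤ |dhat W m i ω - gdeg W (Upos m i ω)| := hdev
  rw [dhat_eq_sum_erase_div, ← hmean] at hdev
  exact hdev

lemma Pmodel_exists_le_abs_dhat_sub_gdeg_le (hW : Measurable (Function.uncurry W))
    (hW01 : ∀ u ∈ Set.Icc (0 : ℝ) 1, ∀ v ∈ Set.Icc (0 : ℝ) 1, W u v ∈ Set.Icc (0 : ℝ) 1)
    (hδ : 0 ≤ δ) :
    Pmodel M n {ω | ∃ p : NodeIdx M n, δ ≤ |dhat W p.1 p.2 ω - gdeg W (ω.1 p)|} ≤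
      ∑ m, n m * ENNReal.ofReal (2 * Real.exp (-(2 * δ ^ 2 * ((n m : ℝ) - 1)))) :=
  calc _ = Pmodel M n (⋃ p : NodeIdx M n, {ω | δ ≤ |dhat W p.1 p.2 ω - gdeg W (ω.1 p)|}) := by
        rw [Set.ofPred_exists]
    _ ≤ ∑ p : NodeIdx M n,
          ENNReal.ofReal (2 * Real.exp (-(2 * δ ^ 2 * ((n p.1 : ℝ) - 1)))) :=
        (measure_iUnion_fintype_le _ _).trans <| Finset.sum_le_sum fun p _ =>
          Pmodel_le_abs_dhat_sub_gdeg_le hW hW01 hδ p.1 p.2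
    _ = _ := by simp [Fintype.sum_sigma]

end EmpiricalDegree

section Consistency

variable {W : ℝ → ℝ → ℝ} {δ : ℝ}

lemma card_NodeIdx : Fintype.card (NodeIdx M n) = Ntot M n := by simp [Ntot]

lemma Uhat_eq_empCDF_sub (m : Fin M) (i : Fin (n m)) (ω : Sample M n) :
    Uhat W m i ω = empCDF (fun p : NodeIdx M n => dhat W p.1 p.2 ω) (dhat W m i ω) -
      1 / (2 * Ntot M n) := by
  rw [Uhat, rhat, empCDF, card_NodeIdx]

lemma abs_Uhat_sub_Upos_le {ω : Sample M n} {δ' η : ℝ} (hδ : 0 ≤ δ) (hδ' : 0 ≤ δ')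
    (hsep : ∀ x ∈ Set.Icc (0 : ℝ) 1, ∀ y ∈ Set.Icc (0 : ℝ) 1,
      x + δ ≤ y → gdeg W x + η ≤ gdeg W y)
    (hω : ∀ p, ω.1 p ∈ Set.Icc (0 : ℝ) 1)
    (hdeg : ∀ p : NodeIdx M n, |dhat W p.1 p.2 ω - gdeg W (ω.1 p)| < η / 2)
    (hcdf : ∀ c ∈ Set.Icc (0 : ℝ) 1, |empCDF ω.1 c - c| ≤ δ') (m : Fin M) (i : Fin (n m)) :
    |Uhat W m i ω - Upos m i ω| ≤ δ + δ' + 1 / (2 * Ntot M n) := by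
  have hrank : |empCDF (fun p : NodeIdx M n => dhat W p.1 p.2 ω) (dhat W m i ω) - Upos m i ω| ≤
      δ + δ' :=
    abs_empCDF_self_sub_le (i := (⟨m, i⟩ : NodeIdx M n)) hδ hδ' (hω _) (fun p q hpq => by
      linarith [hsep _ (hω p) _ (hω q) hpq, (abs_lt.1 (hdeg p)).2, (abs_lt.1 (hdeg q)).1]) hcdf
  have hcorr : (0 : ℝ) ≤ 1 / (2 * Ntot M n) := by positivity
  calc |Uhat W m i ω - Upos m i ω|
      = |(empCDF (fun p : NodeIdx M n => dhat W p.1 p.2 ω) (dhat W m i ω) - Upos m i ω) -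
          1 / (2 * Ntot M n)| := by rw [Uhat_eq_empCDF_sub, sub_right_comm]
    _ ≤ _ := (abs_sub _ _).trans (by rw [abs_of_nonneg hcorr]; gcongr)

lemma tendsto_Ntot [Nonempty (Fin M)] {n : ℕ → Fin M → ℕ}
    (hgrow : ∀ m, Tendsto (fun t => n t m) atTop atTop) :
    Tendsto (fun t => Ntot M (n t)) atTop atTop :=
  tendsto_atTop_mono
    (fun _ => Finset.single_le_sum (fun _ _ => Nat.zero_le _) (Finset.mem_univ _))
    (hgrow (Classical.arbitrary (Fin M)))

lemma tendsto_Pmodel_exists_le_abs_dhat_sub_gdeg (hW : Measurable (Function.uncurry W))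
    (hW01 : ∀ u ∈ Set.Icc (0 : ℝ) 1, ∀ v ∈ Set.Icc (0 : ℝ) 1, W u v ∈ Set.Icc (0 : ℝ) 1)
    {n : ℕ → Fin M → ℕ} (hgrow : ∀ m, Tendsto (fun t => n t m) atTop atTop) (hδ : 0 < δ) :
    Tendsto (fun t => Pmodel M (n t)
      {ω | ∃ p : NodeIdx M (n t), δ ≤ |dhat W p.1 p.2 ω - gdeg W (ω.1 p)|}) atTop (nhds 0) := by
  have hbound : Tendsto (fun t => ∑ m, (n t m : ENNReal) *
      ENNReal.ofReal (2 * Real.exp (-(2 * δ ^ 2 * ((n t m : ℝ) - 1))))) atTop (nhds 0) := by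
    simpa only [Finset.sum_const_zero, Function.comp_apply] using
      tendsto_finsetSum Finset.univ fun m _ =>
        (tendsto_natCast_mul_ofReal_two_mul_exp_neg (c := 2 * δ ^ 2) (by positivity) 1).comp
          (hgrow m)
  exact tendsto_of_tendsto_of_tendsto_of_le_of_le tendsto_const_nhds hbound
    (fun _ => zero_le) fun t => Pmodel_exists_le_abs_dhat_sub_gdeg_le hW hW01 hδ.le

lemma tendsto_Pmodel_exists_le_abs_empCDF_sub {n : ℕ → Fin M → ℕ}
    (hN : Tendsto (fun t => Ntot M (n t)) atTop atTop) (hδ : 0 < δ) :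
    Tendsto (fun t => Pmodel M (n t)
      {ω | ∃ c ∈ Set.Icc (0 : ℝ) 1, δ ≤ |empCDF ω.1 c - c|}) atTop (nhds 0) := by
  obtain ⟨K, hK, hKδ⟩ := Real.exists_nat_pos_inv_lt (half_pos hδ)
  have hbound : Tendsto (fun t => ((K : ENNReal) + 1) *
      ENNReal.ofReal (2 * Real.exp (-(2 * (δ / 2) ^ 2 * Ntot M (n t))))) atTop (nhds 0) := by
    simpa only [mul_zero, Function.comp_apply] using ENNReal.Tendsto.const_mul
      ((tendsto_ofReal_two_mul_exp_neg (c := 2 * (δ / 2) ^ 2) (by positivity)).comp hN)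
      (.inr (ENNReal.add_ne_top.2 ⟨ENNReal.natCast_ne_top K, ENNReal.one_ne_top⟩))
  refine tendsto_of_tendsto_of_tendsto_of_le_of_le tendsto_const_nhds hbound
    (fun _ => zero_le) fun t => ?_
  have hpi := pi_unif_exists_le_abs_empCDF_sub_le (ι := NodeIdx M (n t)) hK (half_pos hδ).le
  rw [card_NodeIdx] at hpi
  refine (measure_mono ?_).trans ((measurePreserving_fst.measure_preimage_le _).trans hpi)
  rintro ω ⟨c, hc, h⟩
  exact ⟨c, hc, by rw [one_div]; linarith⟩

lemma Pmodel_exists_le_abs_Uhat_sub_Upos_le {δ' η ε : ℝ} (hδ : 0 ≤ δ) (hδ' : 0 ≤ δ')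
    (hsep : ∀ x ∈ Set.Icc (0 : ℝ) 1, ∀ y ∈ Set.Icc (0 : ℝ) 1,
      x + δ ≤ y → gdeg W x + η ≤ gdeg W y)
    (hε : δ + δ' + 1 / (2 * Ntot M n) < ε) :
    Pmodel M n {ω | ∃ (m : Fin M) (i : Fin (n m)), ε ≤ |Uhat W m i ω - Upos m i ω|} ≤
      Pmodel M n {ω | ∃ p : NodeIdx M n, η / 2 ≤ |dhat W p.1 p.2 ω - gdeg W (ω.1 p)|} +
        Pmodel M n {ω | ∃ c ∈ Set.Icc (0 : ℝ) 1, δ' ≤ |empCDF ω.1 c - c|} := by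
  refine (measure_mono_ae ?_).trans (measure_union_le _ _)
  filter_upwards [ae_position_mem_Icc] with ω hω
  rintro ⟨m, i, herr⟩
  by_contra hgood
  obtain ⟨hdeg, hcdf⟩ := not_or.1 hgood
  have hdeg' (p : NodeIdx M n) : |dhat W p.1 p.2 ω - gdeg W (ω.1 p)| < η / 2 :=
    lt_of_not_ge fun h => hdeg ⟨p, h⟩
  have hcdf' (c : ℝ) (hc : c ∈ Set.Icc (0 : ℝ) 1) : |empCDF ω.1 c - c| ≤ δ' :=
    le_of_not_ge fun h => hcdf ⟨c, hc, h⟩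
  exact (herr.trans (abs_Uhat_sub_Upos_le hδ hδ' hsep hω hdeg' hcdf' m i)).not_gt hε

end Consistency

theorem jgs_latent_uniform_consistency_all_graphs_general
    (M : ℕ) (W : ℝ → ℝ → ℝ)
    (hWmeas : Measurable (Function.uncurry W))
    (hWrange : ∀ u ∈ Set.Icc (0 : ℝ) 1, ∀ v ∈ Set.Icc (0 : ℝ) 1, W u v ∈ Set.Icc (0 : ℝ) 1)
    (hmono : StrictMonoOn (gdeg W) (Set.Icc (0 : ℝ) 1))
    (n : ℕ → Fin M → ℕ)
    (hgrow : ∀ m : Fin M, Tendsto (fun t => n t m) atTop atTop) :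
    ∀ ε > (0 : ℝ),
      Tendsto
        (fun t => Pmodel M (n t)
          {ω | ∃ (m : Fin M) (i : Fin (n t m)), ε ≤ |Uhat W m i ω - Upos m i ω|})
        atTop (nhds 0) := by
  intro ε hε
  rcases isEmpty_or_nonempty (Fin M) with hM | hM
  · simp
  obtain ⟨η, hη, hsep⟩ := exists_pos_forall_add_le_of_strictMonoOn hmono (half_pos hε)
  have hN := tendsto_Ntot hgrow
  have hdeg := tendsto_Pmodel_exists_le_abs_dhat_sub_gdeg hWmeas hWrange hgrow (half_pos hη)
  have hcdf := tendsto_Pmodel_exists_le_abs_empCDF_sub hN (δ := ε / 4) (by positivity)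
  have hbad := hdeg.add hcdf
  rw [add_zero] at hbad
  have hcorr : Tendsto (fun t => 1 / (2 * Ntot M (n t) : ℝ)) atTop (nhds 0) :=
    tendsto_const_nhds.div_atTop
      ((tendsto_natCast_atTop_atTop.comp hN).const_mul_atTop two_pos)
  refine tendsto_of_tendsto_of_tendsto_of_le_of_le' tendsto_const_nhds hbad
    (.of_forall fun _ => zero_le) ?_
  filter_upwards [hcorr.eventually_lt_const (show 0 < ε / 4 by positivity)] with t ht
  exact Pmodel_exists_le_abs_Uhat_sub_Upos_le (by positivity) (by positivity) hsep (by linarith)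

/-- **Corollary (ii) (Uniform consistency when all graph sizes diverge).**
Fix the number of graphs `M` and consider a sequence (indexed by `t`) of collections of
graphs sampled from the same graphon `W`, whose normalized degree function `g` is
strictly increasing and satisfies `L₁|x-y| ≤ |g(x)-g(y)|` on `[0,1]`. If
`n_t^{(m)} → ∞` for every `m ∈ ⟦M⟧`, then
`max_{m ∈ ⟦M⟧} max_{i ∈ ⟦n^{(m)}⟧} |Û^{JGS}_{i,(m)} - U_{i,(m)}| → 0` in probability,
i.e. for every `ε > 0` the probability that some node of some graph has latent position
error at least `ε` tends to `0`. -/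
theorem jgs_latent_uniform_consistency_all_graphs
    (M : ℕ) (W : ℝ → ℝ → ℝ)
    (hWmeas : Measurable (Function.uncurry W))
    (hWsym : ∀ u v, W u v = W v u)
    (hWrange : ∀ u ∈ Set.Icc (0:ℝ) 1, ∀ v ∈ Set.Icc (0:ℝ) 1, W u v ∈ Set.Icc (0:ℝ) 1)
    (L₁ : ℝ) (hL₁ : 0 < L₁)
    (hmono : StrictMonoOn (gdeg W) (Set.Icc (0:ℝ) 1))
    (hlip : ∀ x ∈ Set.Icc (0:ℝ) 1, ∀ y ∈ Set.Icc (0:ℝ) 1,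
      L₁ * |x - y| ≤ |gdeg W x - gdeg W y|)
    (n : ℕ → Fin M → ℕ)
    (hgrow : ∀ m : Fin M, Filter.Tendsto (fun t => n t m) Filter.atTop Filter.atTop) :
    ∀ ε > (0:ℝ),
      Filter.Tendsto
        (fun t => Pmodel M (n t)
          {ω | ∃ (m : Fin M) (i : Fin (n t m)), ε ≤ |Uhat W m i ω - Upos m i ω|})
        Filter.atTop (nhds 0) := by
  exact jgs_latent_uniform_consistency_all_graphs_general M W hWmeas hWrange hmono n hgrow

end
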